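/- arXiv:2003.10301 — 2 statements merged into one kernel-verified Lean document; each statement's English description precedes it below -/
import Mathlib

section
/- Let Λ = Z_p[[X]] and M a finitely generated Λ-module. There is an exact sequence 0 → M_tor → M → M^{++} → T₂(M) → 0 where M_tor is the maximal torsion submodule, M^{++} = Hom_Λ(Hom_Λ(M,Λ),Λ) is the reflexive hull (a free Λ-module), and T₂(M) is finite. -/
/-!
A functional on `M ⊗ Frac R` becomes integral on the finitely generated module `M` after clearing
denominators, so functionals on `M` detect exactly the non-torsion elements.

If `x` is a prime element and `R ⧸ (x)` is a principal ideal domain, then `M* ⧸ x M*` is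
torsion-free, hence free, over `R ⧸ (x)`. As `x` is regular on `M*`, Nakayama makes `M*` free.

Let `C` be the cokernel of `M → M**`. Restriction along this map is an isomorphism `M*** ≃ M*`,
which forces `Hom(C, R) = 0`, and also `Hom(C, R ⧸ (a)) = 0` for every regular `a` because `M**` is
free. By Rees's criterion the annihilator of `C` then contains a regular sequence `a, b`. When
`dim R ≤ 2`, this makes `R ⧸ ann C` Artinian, hence finite when the residue field is.
-/

section

open IsLocalRing Module

section Dual

variable {R M : Type*} [CommRing R] [AddCommGroup M] [Module R M]

theorem exists_dual_eq_smul_of_forall_dvd {a : R} (ha : IsSMulRegular R a) {φ : Dual R M}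
    (hφ : ∀ m, a ∣ φ m) : ∃ ψ : Dual R M, φ = a • ψ := by
  have hrange (m : M) : φ m ∈ LinearMap.range (LinearMap.lsmul R R a) :=
    (hφ m).imp fun _ hc ↦ hc.symm
  exact ⟨_, (φ.codRestrictOfInjective_comp (LinearMap.lsmul R R a) ha hrange).symm⟩

theorem exists_dual_algebraMap_apply_eq_smul [Module.Finite R M] (K : Type*) [CommRing K]
    [Algebra R K] [IsFractionRing R K] (f : M →ₗ[R] K) :
    ∃ a ∈ nonZeroDivisors R, ∃ g : Dual R M, ∀ m, algebraMap R K (g m) = a • f m := by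
  have hfg : (LinearMap.range f).FG := Module.Finite.iff_fg.1 inferInstance
  obtain ⟨a, ha, hint⟩ := FractionalIdeal.isFractional_of_fg (S := nonZeroDivisors R) hfg
  have hrange (m : M) : (a • f) m ∈ LinearMap.range (Algebra.linearMap R K) := hint _ ⟨m, rfl⟩
  exact ⟨a, ha, _,
    (a • f).codRestrictOfInjective_comp_apply _ (IsFractionRing.injective R K) hrange⟩

theorem exists_dual_apply_ne_zero_of_notMem_torsion [IsDomain R] [Module.Finite R M] {m : M}
    (hm : m ∉ Submodule.torsion R M) : ∃ g : Dual R M, g m ≠ 0 := by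
  let K := Localization (nonZeroDivisors R)
  let : Field K := inferInstanceAs (Field (FractionRing R))
  let ι := LocalizedModule.mkLinearMap (nonZeroDivisors R) M
  have hιm : ι m ≠ 0 := fun h ↦ hm ((IsLocalizedModule.eq_zero_iff (nonZeroDivisors R) ι).1 h)
  obtain ⟨f, hf⟩ : ∃ f : Dual K (LocalizedModule (nonZeroDivisors R) M), f (ι m) ≠ 0 := by
    by_contra! h
    exact hιm ((forall_dual_apply_eq_zero_iff K _).1 h)
  obtain ⟨a, ha, g, hg⟩ := exists_dual_algebraMap_apply_eq_smul K (f.restrictScalars R ∘ₗ ι)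
  refine ⟨g, fun hgm ↦ hf ?_⟩
  have hafm : a • f (ι m) = 0 := by simpa [hgm] using (hg m).symm
  exact (smul_eq_zero_iff_right (nonZeroDivisors.ne_zero ha)).1 hafm

theorem ker_dual_eval_eq_torsion [IsDomain R] [Module.Finite R M] :
    LinearMap.ker (Dual.eval R M) = Submodule.torsion R M := by
  refine le_antisymm (fun m hm ↦ ?_) ?_
  · by_contra hm'
    obtain ⟨g, hg⟩ := exists_dual_apply_ne_zero_of_notMem_torsion hm'
    exact hg (LinearMap.congr_fun (LinearMap.mem_ker.1 hm) g)
  · rintro m ⟨a, ham : (a : R) • m = 0⟩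
    refine LinearMap.mem_ker.2 (LinearMap.ext fun g ↦ ?_)
    have hag : (a : R) * g m = 0 := by rw [← smul_eq_mul, ← map_smul, ham, map_zero]
    exact (mul_eq_zero.1 hag).resolve_left (nonZeroDivisors.coe_ne_zero a)

theorem bijective_dualMap_dual_eval [IsReflexive R (Dual R M)] :
    Function.Bijective (Dual.eval R M).dualMap := by
  have hinv : Function.LeftInverse (Dual.eval R M).dualMap (Dual.eval R (Dual R M)) :=
    fun _ ↦ rfl
  exact ⟨(hinv.rightInverse_of_surjective (bijective_dual_eval R _).2).injective, hinv.surjective⟩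

open Pointwise in
theorem isTorsionFree_quotSMulTop_dual [IsDomain R] {x : R} (hx : Prime x) :
    IsTorsionFree (R ⧸ Ideal.span {x}) (QuotSMulTop x (Dual R M)) := by
  have : (Ideal.span {x}).IsPrime := (Ideal.span_singleton_prime hx.ne_zero).2 hx
  refine isTorsionFree_iff_smul_eq_zero.2 fun r d hrd ↦ or_iff_not_imp_left.2 fun hr ↦ ?_
  obtain ⟨r, rfl⟩ := Ideal.Quotient.mk_surjective r
  obtain ⟨φ, rfl⟩ := Submodule.mkQ_surjective _ d
  have hxr : ¬ x ∣ r := by rwa [Ideal.Quotient.eq_zero_iff_dvd] at hr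
  have hmem : r • φ ∈ x • (⊤ : Submodule R (Dual R M)) := (Submodule.Quotient.mk_eq_zero _).1 hrd
  obtain ⟨χ, -, hχ⟩ := (Submodule.mem_smul_pointwise_iff_exists _ _ _).1 hmem
  have hdvd (m : M) : x ∣ φ m := by
    have hdvd_mul : x ∣ r * φ m := ⟨χ m, (LinearMap.congr_fun hχ m).symm⟩
    exact (hx.dvd_or_dvd hdvd_mul).resolve_left hxr
  obtain ⟨ψ, rfl⟩ := exists_dual_eq_smul_of_forall_dvd (.of_ne_zero hx.ne_zero) hdvd
  exact (Submodule.Quotient.mk_eq_zero _).2 (Submodule.smul_mem_pointwise_smul _ _ _ trivial)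

theorem free_dual_of_isPrincipalIdealRing_quotient [IsDomain R] [IsNoetherianRing R]
    [Module.Finite R M] {x : R} (hx : Prime x) (hjac : x ∈ (⊥ : Ideal R).jacobson)
    [IsPrincipalIdealRing (R ⧸ Ideal.span {x})] : Free R (Dual R M) := by
  have : (Ideal.span {x}).IsPrime := (Ideal.span_singleton_prime hx.ne_zero).2 hx
  have : FinitePresentation R (Dual R M) := finitePresentation_of_finite _ _
  have : Module.Finite (R ⧸ Ideal.span {x}) (QuotSMulTop x (Dual R M)) :=
    .of_restrictScalars_finite R _ _
  have := isTorsionFree_quotSMulTop_dual (M := M) hx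
  have hreg : IsSMulRegular (Dual R M) x := .of_ne_zero hx.ne_zero
  exact (free_quotSMulTop_iff_free R _ hjac hreg).1 free_of_finite_type_torsion_free'

end Dual

section KrullDimension

variable {R : Type*} [CommRing R]

theorem ringKrullDim_quotient_add_two_le {I : Ideal R} {a b : R} (haI : a ∈ I) (hbI : b ∈ I)
    (ha : IsSMulRegular R a) (hb : IsSMulRegular (R ⧸ Ideal.span {a}) b) :
    ringKrullDim (R ⧸ I) + 2 ≤ ringKrullDim R := by
  have hle : Ideal.span {a} ≤ I := (Ideal.span_singleton_le_iff_mem I).2 haI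
  have ha' : a ∈ nonZeroDivisors R :=
    mem_nonZeroDivisors_iff_left.2 fun _ ↦ ha.right_eq_zero_of_smul
  have hb' : Ideal.Quotient.mk (Ideal.span {a}) b ∈ nonZeroDivisors (R ⧸ Ideal.span {a}) :=
    mem_nonZeroDivisors_iff_left.2 fun _ ↦ hb.right_eq_zero_of_smul
  calc ringKrullDim (R ⧸ I) + 2
    _ = ringKrullDim (R ⧸ I) + 1 + 1 := by rw [add_assoc, one_add_one_eq_two]
    _ ≤ ringKrullDim (R ⧸ Ideal.span {a}) + 1 := by
      gcongr
      exact ringKrullDim_succ_le_of_surjective (Ideal.Quotient.factor hle)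
        (Ideal.Quotient.factor_surjective hle) hb'
        ((Ideal.Quotient.factor_mk hle b).trans (Ideal.Quotient.eq_zero_iff_mem.2 hbI))
    _ ≤ ringKrullDim R := ringKrullDim_quotient_succ_le_of_nonZeroDivisor ha'

variable [IsNoetherianRing R] [IsLocalRing R]

theorem ringKrullDim_le_two_of_isPrincipalIdealRing_quotient [IsDomain R] {x : R} (hx : Prime x)
    [IsPrincipalIdealRing (R ⧸ Ideal.span {x})] : ringKrullDim R ≤ 2 := by
  have : (Ideal.span {x}).IsPrime := (Ideal.span_singleton_prime hx.ne_zero).2 hx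
  have hle : ringKrullDim (R ⧸ Ideal.span {x}) ≤ 1 := by
    exact_mod_cast (Ring.krullDimLE_iff (n := 1)).1 inferInstance
  calc ringKrullDim R
    _ = ringKrullDim (R ⧸ Ideal.span {x}) + 1 :=
      (ringKrullDim_quotient_span_singleton_succ_eq_ringKrullDim (.of_ne_zero hx.ne_zero)
        hx.not_isUnit).symm
    _ ≤ 1 + 1 := by gcongr
    _ = 2 := one_add_one_eq_two

theorem finite_of_krullDimLE_zero_quotient_annihilator [Finite (ResidueField R)] {C : Type*}
    [AddCommGroup C] [Module R C] [Module.Finite R C]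
    (hdim : Ring.KrullDimLE 0 (R ⧸ annihilator R C)) : Finite C := by
  have : IsArtinianRing (R ⧸ annihilator R C) := isArtinianRing_iff_krullDimLE_zero.2 hdim
  have : Finite (R ⧸ annihilator R C) :=
    finite_quotient_iff.2 (exists_maximalIdeal_pow_le_of_isArtinianRing_quotient _)
  have htors : IsTorsionBySet R C (annihilator R C) := isTorsionBySet_annihilator R C
  let := htors.module
  have : IsScalarTower R (R ⧸ annihilator R C) C := htors.isScalarTower
  have : Module.Finite (R ⧸ annihilator R C) C := .of_restrictScalars_finite R _ _
  exact finite_of_finite (R ⧸ annihilator R C)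

end KrullDimension

section Cokernel

variable {R M F : Type*} [CommRing R] [AddCommGroup M] [Module R M] [AddCommGroup F] [Module R F]
  {f : M →ₗ[R] F}

theorem subsingleton_dual_quotient_range (hf : Function.Injective f.dualMap) :
    Subsingleton (Dual R (F ⧸ LinearMap.range f)) := by
  refine subsingleton_of_forall_eq 0 fun g ↦ ?_
  have hg : g ∘ₗ (LinearMap.range f).mkQ = 0 := hf <| by
    rw [LinearMap.dualMap_apply', LinearMap.comp_assoc, LinearMap.range_mkQ_comp,
      LinearMap.comp_zero, map_zero]
  exact Submodule.linearMap_qext _ (hg.trans (LinearMap.zero_comp _).symm)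

theorem subsingleton_linearMap_quotient_range_quotient_span [Projective R F]
    (hf : Function.Bijective f.dualMap) {a : R} (ha : IsSMulRegular R a) :
    Subsingleton ((F ⧸ LinearMap.range f) →ₗ[R] (R ⧸ Ideal.span {a})) := by
  refine subsingleton_of_forall_eq 0 fun g ↦ ?_
  obtain ⟨φ, hφ⟩ := projective_lifting_property (Ideal.span {a}).mkQ
    (g ∘ₗ (LinearMap.range f).mkQ) (Submodule.mkQ_surjective _)
  have hdvd (m : M) : a ∣ f.dualMap φ m := by
    have hfm : (LinearMap.range f).mkQ (f m) = 0 := by simp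
    rw [← Ideal.Quotient.eq_zero_iff_dvd]
    exact (LinearMap.congr_fun hφ (f m)).trans ((congrArg g hfm).trans (map_zero g))
  obtain ⟨χ, hχ⟩ := exists_dual_eq_smul_of_forall_dvd ha hdvd
  obtain ⟨ψ, rfl⟩ := hf.2 χ
  obtain rfl : φ = a • ψ := hf.1 (by rw [hχ, map_smul])
  refine Submodule.linearMap_qext _ (hφ.symm.trans (LinearMap.ext fun y ↦ ?_))
  exact (Ideal.Quotient.eq_zero_iff_dvd _ _).2 ⟨ψ y, rfl⟩

variable [IsNoetherianRing R] [Module.Finite R F] [Projective R F]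

theorem exists_isSMulRegular_mem_annihilator_quotient_range (hf : Function.Bijective f.dualMap) :
    ∃ a ∈ annihilator R (F ⧸ LinearMap.range f), ∃ b ∈ annihilator R (F ⧸ LinearMap.range f),
      IsSMulRegular R a ∧ IsSMulRegular (R ⧸ Ideal.span {a}) b := by
  obtain ⟨a, ha, hreg_a⟩ :=
    IsSMulRegular.subsingleton_linearMap_iff.1 (subsingleton_dual_quotient_range hf.1)
  obtain ⟨b, hb, hreg_b⟩ := IsSMulRegular.subsingleton_linearMap_iff.1
    (subsingleton_linearMap_quotient_range_quotient_span hf hreg_a)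
  exact ⟨a, ha, b, hb, hreg_a, hreg_b⟩

theorem finite_quotient_range_of_bijective_dualMap [IsLocalRing R] [Finite (ResidueField R)]
    (hf : Function.Bijective f.dualMap) (hdim : ringKrullDim R ≤ 2) :
    Finite (F ⧸ LinearMap.range f) := by
  obtain ⟨a, ha, b, hb, hreg_a, hreg_b⟩ := exists_isSMulRegular_mem_annihilator_quotient_range hf
  have hadd : ringKrullDim (R ⧸ annihilator R (F ⧸ LinearMap.range f)) + 2 ≤ 0 + 2 :=
    (ringKrullDim_quotient_add_two_le ha hb hreg_a hreg_b).trans (hdim.trans_eq (zero_add 2).symm)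
  have hzero := (ENat.WithBot.add_le_add_natCast_right_iff (c := 2)).1 hadd
  exact finite_of_krullDimLE_zero_quotient_annihilator (Ring.krullDimLE_iff.2 hzero)

end Cokernel

section PowerSeries

open PowerSeries

variable (A : Type*) [CommRing A]

theorem finite_residueField_powerSeries [IsLocalRing A] [Finite (ResidueField A)] :
    Finite (ResidueField A⟦X⟧) :=
  have : IsLocalHom (constantCoeff (R := A)) := .of_surjective _ constantCoeff_surj
  .of_injective _ (ResidueField.map (constantCoeff (R := A))).injective

theorem isPrincipalIdealRing_powerSeries_quotient_span_X [IsPrincipalIdealRing A] :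
    IsPrincipalIdealRing (A⟦X⟧ ⧸ Ideal.span {(X : A⟦X⟧)}) := by
  refine .of_surjective ((Ideal.Quotient.mk (Ideal.span {(X : A⟦X⟧)})).comp C) fun y ↦ ?_
  obtain ⟨f, rfl⟩ := Ideal.Quotient.mk_surjective y
  refine ⟨constantCoeff f, Ideal.Quotient.eq.2 ?_⟩
  rw [Ideal.mem_span_singleton, X_dvd_iff, map_sub, constantCoeff_C, sub_self]

end PowerSeries

/-- The rings `R` allowed here include every regular local ring of dimension `2` with finite residue
field: take for `x` an element of the maximal ideal outside its square. -/
theorem stmt10_general {R : Type*} [CommRing R] [IsDomain R] [IsNoetherianRing R] [IsLocalRing R]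
    [Finite (ResidueField R)] {x : R} (hx : Prime x) [IsPrincipalIdealRing (R ⧸ Ideal.span {x})]
    (M : Type*) [AddCommGroup M] [Module R M] [Module.Finite R M] :
    LinearMap.ker (Dual.eval R M) = Submodule.torsion R M ∧
      Free R (Dual R (Dual R M)) ∧
      Finite (Dual R (Dual R M) ⧸ LinearMap.range (Dual.eval R M)) := by
  have hjac : x ∈ (⊥ : Ideal R).jacobson := by
    rw [jacobson_eq_maximalIdeal _ bot_ne_top]
    exact hx.not_isUnit
  have : Free R (Dual R M) := free_dual_of_isPrincipalIdealRing_quotient hx hjac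
  exact ⟨ker_dual_eval_eq_torsion, inferInstance,
    finite_quotient_range_of_bijective_dualMap bijective_dualMap_dual_eval
      (ringKrullDim_le_two_of_isPrincipalIdealRing_quotient hx)⟩

end

/-- Λ = ℤ_p[[X]], M a finitely generated Λ-module.  There is an exact sequence
0 → M_tor → M → M^{++} → T₂(M) → 0, where M^{++} = Hom_Λ(Hom_Λ(M,Λ),Λ) is the
reflexive hull (a free Λ-module), the middle map is the canonical evaluation
map (whose kernel is the torsion submodule M_tor), and T₂(M) (its cokernel) is
finite. -/
theorem stmt10 (p : ℕ) [Fact p.Prime]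
    (M : Type*) [AddCommGroup M] [Module (PowerSeries ℤ_[p]) M]
    [Module.Finite (PowerSeries ℤ_[p]) M] :
    LinearMap.ker (Module.Dual.eval (PowerSeries ℤ_[p]) M) =
        Submodule.torsion (PowerSeries ℤ_[p]) M ∧
      Module.Free (PowerSeries ℤ_[p])
        (Module.Dual (PowerSeries ℤ_[p]) (Module.Dual (PowerSeries ℤ_[p]) M)) ∧
      Finite ((Module.Dual (PowerSeries ℤ_[p]) (Module.Dual (PowerSeries ℤ_[p]) M)) ⧸
        LinearMap.range (Module.Dual.eval (PowerSeries ℤ_[p]) M)) := by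
  have := finite_residueField_powerSeries ℤ_[p]
  have := isPrincipalIdealRing_powerSeries_quotient_span_X ℤ_[p]
  exact stmt10_general PowerSeries.X_prime M
end

section
/- Let Λ = Z_p[[X]] and let M₁, M₂ be finitely generated Λ-modules, each of Λ-rank one, each with μ-invariant zero and with no nontrivial finite Λ-submodules. If M₁/pM₁ ≅ M₂/pM₂ as modules over Λ/pΛ ≅ F_p[[X]], then λ(M₁) + c(M₁) = λ(M₂) + c(M₂), where c(M) is defined by |T₂(M)[p]| = p^{c(M)} and T₂(M) is the finite cokernel of the map from M to its reflexive hull. -/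
/-!
Write `Λ = O⟦X⟧`, let `ϖ` be a uniformizer of `O` with residue field of order `q`, and let `N` be
the double dual of `M`. Reducing `M → N` modulo `ϖ` and applying the snake lemma, which needs only
that `N` is `ϖ`-torsion-free, gives an exact sequence

`0 → M_tor / ϖ → ker (M / ϖ → N / ϖ) → T₂(M)[ϖ] → 0`.

When `M` has no `ϖ`-torsion, Weierstrass preparation makes `M_tor` free of rank `λ(M)` over `O`, so
the kernel has order `q ^ (λ(M) + c(M))`. The kernel is finite, hence killed by a power of `X`,
while `X` acts injectively on `N / ϖ`; so it is the `X`-power torsion of `M / ϖ` and depends on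
`M / ϖ` alone.
-/

namespace Iwasawa

open Module PowerSeries IsLocalRing Function
open scoped Pointwise

section Modules

variable {R M N P M' N' : Type*} [CommRing R] [AddCommGroup M] [Module R M] [AddCommGroup N]
  [Module R N] [AddCommGroup P] [Module R P] [AddCommGroup M'] [Module R M'] [AddCommGroup N']
  [Module R N']

theorem isSMulRegular_of_finite_torsion {a : R}
    (hμ : {x : M | ∃ k : ℕ, a ^ k • x = 0}.Finite)
    (hfin : ∀ S : Submodule R M, (S : Set M).Finite → S = ⊥) : IsSMulRegular M a := by
  rw [isSMulRegular_iff_torsionBy_eq_bot]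
  exact hfin _ (hμ.subset fun x hx ↦ ⟨1, by simpa using hx⟩)

theorem exists_pow_smul_eq_zero_of_finite [Finite M] {x : R}
    (hx : x ∈ Ideal.jacobson (⊥ : Ideal R)) (m : M) : ∃ n : ℕ, x ^ n • m = 0 := by
  obtain ⟨i, j, hij, heq⟩ : ∃ i j : ℕ, i < j ∧ x ^ i • m = x ^ j • m := by
    obtain ⟨i, j, hne, heq⟩ := Finite.exists_ne_map_eq_of_infinite fun i : ℕ ↦ x ^ i • m
    exact hne.lt_or_gt.elim (fun h ↦ ⟨i, j, h, heq⟩) fun h ↦ ⟨j, i, h, heq.symm⟩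
  obtain ⟨k, rfl⟩ := Nat.exists_eq_add_of_lt hij
  have hunit : IsUnit (x * -x ^ k + 1) := Ideal.mem_jacobson_bot.mp hx _
  refine ⟨i, hunit.smul_eq_zero.mp ?_⟩
  calc (x * -x ^ k + 1) • x ^ i • m = x ^ i • m - x ^ (i + k + 1) • m := by
        rw [smul_smul, ← sub_smul]; ring_nf
    _ = 0 := sub_eq_zero.mpr heq

theorem ker_eq_torsion'_powers {x : R} (hx : x ∈ Ideal.jacobson (⊥ : Ideal R)) (g : M →ₗ[R] N)
    [Finite (LinearMap.ker g)] (hN : IsSMulRegular N x) :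
    LinearMap.ker g = Submodule.torsion' R M (Submonoid.powers x) := by
  refine le_antisymm (fun m hm ↦ ?_) ?_
  · obtain ⟨n, hn⟩ := exists_pow_smul_eq_zero_of_finite hx (⟨m, hm⟩ : LinearMap.ker g)
    exact ⟨⟨x ^ n, n, rfl⟩, congrArg Subtype.val hn⟩
  · rintro m ⟨⟨_, n, rfl⟩, hm⟩
    refine (hN.pow n).right_eq_zero_of_smul ?_
    rw [← map_smul]
    exact (congrArg g hm).trans (map_zero g)

theorem card_torsion'_congr (e : M ≃ₗ[R] N) (S : Submonoid R) :
    Nat.card (Submodule.torsion' R M S) = Nat.card (Submodule.torsion' R N S) := by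
  refine Nat.card_congr (e.toEquiv.subtypeEquiv fun x ↦ exists_congr fun s ↦ ?_)
  exact (e.map_eq_zero_iff (x := s • x)).symm.trans (by rw [Submonoid.smul_def, map_smul]; rfl)

theorem card_ker_eq_card_ker {x : R} (hx : x ∈ Ideal.jacobson (⊥ : Ideal R))
    (e : M ≃ₗ[R] M')
    {g : M →ₗ[R] N} [Finite (LinearMap.ker g)] (hN : IsSMulRegular N x)
    {g' : M' →ₗ[R] N'} [Finite (LinearMap.ker g')] (hN' : IsSMulRegular N' x) :
    Nat.card (LinearMap.ker g) = Nat.card (LinearMap.ker g') := by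
  rw [ker_eq_torsion'_powers hx g hN, ker_eq_torsion'_powers hx g' hN', card_torsion'_congr e]

theorem card_ker_comp_of_surjective {f : M →ₗ[R] N} (hf : Surjective f) (g : N →ₗ[R] P) :
    Nat.card (LinearMap.ker (g ∘ₗ f)) =
      Nat.card (LinearMap.ker f) * Nat.card (LinearMap.ker g) := by
  let φ : LinearMap.ker (g ∘ₗ f) →ₗ[R] LinearMap.ker g := f.restrict fun _ hm ↦ hm
  have hφ : Surjective φ := by
    rintro ⟨n, hn⟩
    obtain ⟨m, rfl⟩ := hf n
    exact ⟨⟨m, hn⟩, rfl⟩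
  have hker : LinearMap.ker φ = (LinearMap.ker f).submoduleOf (LinearMap.ker (g ∘ₗ f)) :=
    LinearMap.ker_restrict _
  rw [Submodule.card_eq_card_quotient_mul_card (LinearMap.ker φ),
    Nat.card_congr (φ.quotKerEquivOfSurjective hφ).toEquiv, hker,
    Nat.card_congr (Submodule.submoduleOfEquivOfLe (LinearMap.ker_le_ker_comp f g)).toEquiv]

theorem card_ker_quotSMulTop_map_subtype {a : R} (hN : IsSMulRegular N a) (I : Submodule R N) :
    Nat.card (LinearMap.ker (QuotSMulTop.map a I.subtype)) =
      Nat.card (Submodule.torsionBy R (N ⧸ I) a) := by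
  have hexact : Exact I.subtype I.mkQ := LinearMap.exact_subtype_mkQ I
  have htorsion : Exact (Submodule.torsionBy R (N ⧸ I) a).subtype (LinearMap.lsmul R (N ⧸ I) a) :=
    LinearMap.exact_subtype_ker_map _
  have hquot (K : Type _) [AddCommGroup K] [Module R K] :
      Exact (LinearMap.lsmul R K a) (a • (⊤ : Submodule R K)).mkQ := by
    rw [LinearMap.exact_iff, Submodule.ker_mkQ, LinearMap.range_eq_map]
    rfl
  let δ : Submodule.torsionBy R (N ⧸ I) a →ₗ[R] QuotSMulTop a I :=
    SnakeLemma.δ' (LinearMap.lsmul R I a) (LinearMap.lsmul R N a) (LinearMap.lsmul R (N ⧸ I) a)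
      I.subtype I.mkQ hexact I.subtype I.mkQ hexact (by ext; rfl) (by ext; rfl)
      (Submodule.torsionBy R (N ⧸ I) a).subtype htorsion
      (a • (⊤ : Submodule R I)).mkQ (hquot I) I.mkQ_surjective I.injective_subtype
  have hinj : Injective δ := by
    have hregular : Exact (0 : PUnit →ₗ[R] N) (LinearMap.lsmul R N a) :=
      (LinearMap.exact_zero_iff_injective _ _).mpr hN
    have h : Exact (0 : PUnit →ₗ[R] _) δ :=
      SnakeLemma.exact_δ'_right (ι₂ := (0 : PUnit →ₗ[R] N)) _ _ _ _ _ _ _ _ _ _ _ hregular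
        _ _ _ _ _ _ _ (by simp) (Submodule.injective_subtype _)
    exact (LinearMap.exact_zero_iff_injective _ _).mp h
  have hrange : LinearMap.ker (QuotSMulTop.map a I.subtype) = LinearMap.range δ :=
    (SnakeLemma.exact_δ'_left (π₂ := (a • (⊤ : Submodule R N)).mkQ)
      _ _ _ _ _ _ _ _ _ _ _ _ _ _ _ (hquot N) _ _ _
      (QuotSMulTop.map_comp_mkQ a I.subtype) (Submodule.mkQ_surjective _)).linearMap_ker_eq
  rw [hrange, Nat.card_congr (LinearEquiv.ofInjective δ hinj).toEquiv]

theorem card_ker_quotSMulTop_map {a : R} (hN : IsSMulRegular N a) (f : M →ₗ[R] N) :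
    Nat.card (LinearMap.ker (QuotSMulTop.map a f)) =
      Nat.card (QuotSMulTop a (LinearMap.ker f)) *
        Nat.card (Submodule.torsionBy R (N ⧸ LinearMap.range f) a) := by
  have hexact : Exact (LinearMap.ker f).subtype f := LinearMap.exact_subtype_ker_map f
  have hinj : Injective (QuotSMulTop.map a (LinearMap.ker f).subtype) := by
    have h := QuotSMulTop.map_first_exact_on_four_term_exact_of_isSMulRegular_last
      (f₁ := (0 : PUnit →ₗ[R] LinearMap.ker f))
      ((LinearMap.exact_zero_iff_injective _ _).mpr (LinearMap.ker f).injective_subtype) hexact hN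
    rw [map_zero] at h
    exact (LinearMap.exact_zero_iff_injective _ _).mp h
  have hker : LinearMap.ker (QuotSMulTop.map a f.rangeRestrict) =
      LinearMap.range (QuotSMulTop.map a (LinearMap.ker f).subtype) :=
    (QuotSMulTop.map_exact a
      (fun m ↦ by rw [← hexact m]; simp [Subtype.ext_iff])
      f.surjective_rangeRestrict).linearMap_ker_eq
  have hcomp : QuotSMulTop.map a f =
      QuotSMulTop.map a (LinearMap.range f).subtype ∘ₗ QuotSMulTop.map a f.rangeRestrict := by
    rw [← QuotSMulTop.map_comp, LinearMap.subtype_comp_codRestrict]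
  rw [hcomp, card_ker_comp_of_surjective
      (QuotSMulTop.map_surjective a f.surjective_rangeRestrict),
    card_ker_quotSMulTop_map_subtype hN, hker,
    Nat.card_congr (LinearEquiv.ofInjective _ hinj).toEquiv]

theorem isSMulRegular_quotSMulTop_linearMap {a x : R} (ha : IsSMulRegular N a)
    (hx : IsSMulRegular (QuotSMulTop a N) x) : IsSMulRegular (QuotSMulTop a (M →ₗ[R] N)) x := by
  rw [isSMulRegular_quotient_iff_mem_of_smul_mem] at hx ⊢
  intro f hf
  obtain ⟨g, -, hg⟩ := hf
  have hfa (m : M) : f m ∈ LinearMap.range (LinearMap.lsmul R N a) := by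
    obtain ⟨n, -, hn⟩ := hx (f m) ⟨g m, trivial, congrArg (· m) hg⟩
    exact ⟨n, hn⟩
  refine ⟨(LinearEquiv.ofInjective (LinearMap.lsmul R N a) ha).symm ∘ₗ f.codRestrict _ hfa,
    trivial, LinearMap.ext fun m ↦ ?_⟩
  exact congrArg Subtype.val
    ((LinearEquiv.ofInjective (LinearMap.lsmul R N a) ha).apply_symm_apply ⟨f m, hfa m⟩)

theorem card_ker_quotSMulTop_map_dual_eval_congr {a x : R}
    (ha : IsSMulRegular R a) (hax : IsSMulRegular (QuotSMulTop a R) x)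
    (hx : x ∈ Ideal.jacobson (⊥ : Ideal R)) (e : QuotSMulTop a M ≃ₗ[R] QuotSMulTop a M')
    [Finite (LinearMap.ker (QuotSMulTop.map a (Dual.eval R M)))]
    [Finite (LinearMap.ker (QuotSMulTop.map a (Dual.eval R M')))] :
    Nat.card (LinearMap.ker (QuotSMulTop.map a (Dual.eval R M))) =
      Nat.card (LinearMap.ker (QuotSMulTop.map a (Dual.eval R M'))) :=
  card_ker_eq_card_ker hx e (isSMulRegular_quotSMulTop_linearMap ha hax)
    (isSMulRegular_quotSMulTop_linearMap ha hax)

theorem ker_dual_eval_eq_torsion [IsDomain R] [Module.FinitePresentation R M] :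
    LinearMap.ker (Dual.eval R M) = Submodule.torsion R M := by
  refine le_antisymm (fun x hx ↦ ?_) ?_
  · rw [Submodule.torsion, Submodule.mem_torsion'_iff,
      ← IsLocalizedModule.eq_zero_iff (nonZeroDivisors R)
        (LocalizedModule.mkLinearMap (nonZeroDivisors R) M),
      ← forall_dual_apply_eq_zero_iff (FractionRing R)]
    -- Clearing denominators, a functional on the localization comes from one on `M`.
    intro φ
    obtain ⟨h, s, hs⟩ := FinitePresentation.exists_lift_of_isLocalizedModule (nonZeroDivisors R)
      (Algebra.linearMap R (FractionRing R))
      (φ.restrictScalars R ∘ₗ LocalizedModule.mkLinearMap (nonZeroDivisors R) M)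
    have hhx : h x = 0 := congrArg (· h) hx
    have hsx := congrArg (· x) hs
    simp only [LinearMap.comp_apply, hhx, map_zero, LinearMap.smul_apply,
      LinearMap.restrictScalars_apply] at hsx
    rw [Submonoid.smul_def, Algebra.smul_def] at hsx
    exact (mul_eq_zero.mp hsx.symm).resolve_left
      (IsFractionRing.to_map_eq_zero_iff.not.mpr (nonZeroDivisors.ne_zero s.2))
  · rintro x ⟨⟨a, ha⟩, hax⟩
    have : a • Dual.eval R M x = 0 := by
      rw [← map_smul]
      exact (congrArg _ hax).trans (map_zero _)
    exact (smul_eq_zero.mp this).resolve_left (nonZeroDivisors.ne_zero ha)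

theorem exists_not_dvd_isTorsionBy [IsDomain R] [WfDvdMonoid R] [Module.Finite R M]
    (hM : IsTorsion R M) {a : R}
    (ha : ¬ IsUnit a) (haM : IsSMulRegular M a) : ∃ g : R, ¬ a ∣ g ∧ IsTorsionBy R M g := by
  obtain ⟨f, hf, hf0⟩ := Submodule.annihilator_top_inter_nonZeroDivisors hM
  obtain ⟨g, hfg, hg⟩ := (FiniteMultiplicity.of_not_isUnit ha
    (nonZeroDivisors.ne_zero hf0)).exists_eq_pow_mul_and_not_dvd
  refine ⟨g, hg, fun x ↦ (haM.pow (multiplicity a f)).right_eq_zero_of_smul ?_⟩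
  rw [smul_smul, ← hfg]
  exact Submodule.mem_annihilator.mp hf x trivial

theorem card_quotSMulTop_of_free [Module.Free R M] [Module.Finite R M] {a : R} (ha : ¬ IsUnit a) :
    Nat.card (QuotSMulTop a M) = Nat.card (R ⧸ Ideal.span {a}) ^ finrank R M := by
  have : Nontrivial (R ⧸ Ideal.span {a}) :=
    Ideal.Quotient.nontrivial_iff.mpr (Ideal.span_singleton_eq_top.not.mpr ha)
  have : Nontrivial R := (Ideal.Quotient.mk (Ideal.span {a})).domain_nontrivial
  let b := finBasis (R ⧸ Ideal.span {a}) (TensorProduct R (R ⧸ Ideal.span {a}) M)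
  rw [Nat.card_congr ((QuotSMulTop.equivQuotTensor a M).toEquiv.trans b.equivFun.toEquiv),
    Nat.card_fun, Nat.card_fin, finrank_baseChange]

theorem finite_of_isTorsionBySet {A : Type*} [CommRing A] [Algebra A R] [Module A M]
    [IsScalarTower A R M] [Module.Finite R M] {I : Ideal R} [Module.Finite A (R ⧸ I)]
    (hI : IsTorsionBySet R M I) : Module.Finite A M := by
  let := hI.module
  have : IsScalarTower A (R ⧸ I) M := hI.isScalarTower
  have : IsScalarTower R (R ⧸ I) M := hI.isScalarTower
  have : Module.Finite (R ⧸ I) M := .of_restrictScalars_finite R _ M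
  exact Module.Finite.trans (R ⧸ I) M

theorem finrank_restrictScalars {A B M : Type*} [Semiring A] [Semiring B] [AddCommMonoid M]
    [Module A M] [Module B M] [SMul A B] [IsScalarTower A B M] (Q : Submodule B M) :
    finrank A (Q.restrictScalars A) = finrank A Q :=
  rfl

end Modules

section PowerSeries

variable {R T : Type*} [CommRing R]

theorem C_ne_zero {R : Type*} [Semiring R] {a : R} (ha : a ≠ 0) : (C a : R⟦X⟧) ≠ 0 :=
  (map_ne_zero_iff _ C_injective).mpr ha

theorem C_dvd_iff {R : Type*} [CommSemiring R] {a : R} {f : R⟦X⟧} :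
    C a ∣ f ↔ ∀ i, a ∣ coeff i f := by
  refine ⟨?_, fun h ↦ ?_⟩
  · rintro ⟨g, rfl⟩ i
    exact ⟨coeff i g, coeff_C_mul _ _ _⟩
  · choose g hg using h
    exact ⟨PowerSeries.mk g, by ext i; rw [coeff_C_mul, coeff_mk, hg]⟩

theorem X_mem_jacobson_bot : (X : R⟦X⟧) ∈ Ideal.jacobson (⊥ : Ideal R⟦X⟧) :=
  Ideal.mem_jacobson_bot.mpr fun f ↦ isUnit_iff_constantCoeff.mpr (by simp)

theorem isSMulRegular_X_quotSMulTop_C (a : R) :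
    IsSMulRegular (QuotSMulTop (C a) R⟦X⟧) (X : R⟦X⟧) := by
  rw [isSMulRegular_quotient_iff_mem_of_smul_mem, ← Submodule.ideal_span_singleton_smul]
  simp only [smul_eq_mul, Ideal.mul_top, Ideal.mem_span_singleton, C_dvd_iff]
  intro f hf i
  simpa only [coeff_succ_X_mul] using hf (i + 1)

theorem C_smul [AddCommGroup T] [Module R T] [Module R⟦X⟧ T] [IsScalarTower R R⟦X⟧ T]
    (a : R) (x : T) : (C a : R⟦X⟧) • x = a • x :=
  algebraMap_smul R⟦X⟧ a x

theorem card_quotSMulTop_C [AddCommGroup T] [Module R T] [Module R⟦X⟧ T]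
    [IsScalarTower R R⟦X⟧ T] (a : R) :
    Nat.card (QuotSMulTop (C a : R⟦X⟧) T) = Nat.card (QuotSMulTop a T) := by
  have h : ((C a : R⟦X⟧) • (⊤ : Submodule R⟦X⟧ T)).restrictScalars R = a • ⊤ := by
    ext x
    simp [Submodule.mem_smul_pointwise_iff_exists, C_smul]
  unfold QuotSMulTop
  rw [← h]
  exact Nat.card_congr (Submodule.Quotient.restrictScalarsEquiv R _).symm.toEquiv

theorem finite_quotient_span_of_map_residue_ne_zero {A : Type*} [CommRing A] [IsLocalRing A]
    [IsAdicComplete (maximalIdeal A) A] {g : A⟦X⟧} (hg : g.map (residue A) ≠ 0) :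
    Module.Finite A (A⟦X⟧ ⧸ Ideal.span {g}) := by
  obtain ⟨f, h, H⟩ := exists_isWeierstrassFactorization hg
  have := H.isDistinguishedAt.monic.finite_quotient
  exact Module.Finite.equiv H.algEquivQuotient.toLinearEquiv

end PowerSeries

/-- The module `T₂(M)`: the cokernel of the map from `M` to its reflexive hull `M^{++}`, which is
taken to be the double dual. -/
abbrev BidualCokernel (R M : Type*) [CommRing R] [AddCommGroup M] [Module R M] : Type _ :=
  Dual R (Dual R M) ⧸ LinearMap.range (Dual.eval R M)

/-- The invariant `λ(M)` of an `O⟦X⟧`-module, encoded as the `O`-rank of its `O⟦X⟧`-torsion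
submodule; this is the degree of the characteristic polynomial. -/
noncomputable abbrev lambdaInvariant (O M : Type*) [CommRing O] [AddCommGroup M] [Module O M]
    [Module O⟦X⟧ M] [IsScalarTower O O⟦X⟧ M] : ℕ :=
  finrank O (Submodule.torsion O⟦X⟧ M)

section DiscreteValuationRing

variable {O M : Type*} [CommRing O] [IsDomain O] [IsDiscreteValuationRing O] {ϖ : O}
  [AddCommGroup M] [Module O⟦X⟧ M] [Module O M] [IsScalarTower O O⟦X⟧ M]

theorem map_residue_eq_zero_iff (hϖ : Irreducible ϖ) {f : O⟦X⟧} :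
    f.map (residue O) = 0 ↔ C ϖ ∣ f := by
  simp only [PowerSeries.ext_iff, C_dvd_iff, coeff_map, map_zero, residue_eq_zero_iff,
    hϖ.maximalIdeal_eq, Ideal.mem_span_singleton]

theorem isTorsionFree_of_isSMulRegular {N : Type*} [AddCommGroup N] [Module O N]
    (hϖ : Irreducible ϖ) (hN : IsSMulRegular N ϖ) : IsTorsionFree O N := by
  refine .of_smul_eq_zero fun r x hrx ↦ or_iff_not_imp_left.mpr fun hr ↦ ?_
  obtain ⟨n, u, rfl⟩ := IsDiscreteValuationRing.eq_unit_mul_pow_irreducible hr hϖ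
  rw [mul_smul, u.isUnit.smul_eq_zero] at hrx
  exact (hN.pow n).right_eq_zero_of_smul hrx

variable [IsAdicComplete (maximalIdeal O) O] [Module.Finite O⟦X⟧ M]

theorem finite_of_isTorsion (hϖ : Irreducible ϖ) (hM : IsTorsion O⟦X⟧ M)
    (hreg : IsSMulRegular M (C ϖ : O⟦X⟧)) : Module.Finite O M := by
  have hunit : ¬ IsUnit (C ϖ : O⟦X⟧) := by simpa [isUnit_iff_constantCoeff] using hϖ.not_isUnit
  obtain ⟨g, hdvd, hg⟩ := exists_not_dvd_isTorsionBy hM hunit hreg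
  have := finite_quotient_span_of_map_residue_ne_zero ((map_residue_eq_zero_iff hϖ).not.mpr hdvd)
  exact finite_of_isTorsionBySet ((isTorsionBySet_span_singleton_iff g).mpr hg)

theorem card_quotSMulTop_of_isTorsion (hϖ : Irreducible ϖ) (hM : IsTorsion O⟦X⟧ M)
    (hreg : IsSMulRegular M (C ϖ : O⟦X⟧)) :
    Nat.card (QuotSMulTop (C ϖ : O⟦X⟧) M) = Nat.card (ResidueField O) ^ finrank O M := by
  have : Module.Finite O M := finite_of_isTorsion hϖ hM hreg
  have : IsTorsionFree O M := isTorsionFree_of_isSMulRegular hϖ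
    (by simpa only [IsSMulRegular, C_smul] using hreg)
  have : Module.Free O M := Module.free_of_finite_type_torsion_free'
  rw [card_quotSMulTop_C, card_quotSMulTop_of_free hϖ.not_isUnit, ← hϖ.maximalIdeal_eq]
  rfl

theorem card_quotSMulTop_torsion (hϖ : Irreducible ϖ) (hM : IsSMulRegular M (C ϖ : O⟦X⟧)) :
    Nat.card (QuotSMulTop (C ϖ) (Submodule.torsion O⟦X⟧ M)) =
      Nat.card (ResidueField O) ^ lambdaInvariant O M := by
  have hT := hM.submodule (Submodule.torsion O⟦X⟧ M) _
  exact card_quotSMulTop_of_isTorsion hϖ Submodule.torsion_isTorsion hT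

theorem card_ker_quotSMulTop_map_dual_eval (hϖ : Irreducible ϖ)
    (hM : IsSMulRegular M (C ϖ : O⟦X⟧)) :
    Nat.card (LinearMap.ker (QuotSMulTop.map (C ϖ) (Dual.eval O⟦X⟧ M))) =
      Nat.card (ResidueField O) ^ lambdaInvariant O M *
        Nat.card (Submodule.torsionBy O⟦X⟧ (BidualCokernel O⟦X⟧ M) (C ϖ)) := by
  have : Module.FinitePresentation O⟦X⟧ M := finitePresentation_of_finite _ M
  rw [card_ker_quotSMulTop_map (IsSMulRegular.of_ne_zero (C_ne_zero hϖ.ne_zero)),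
    ker_dual_eval_eq_torsion, card_quotSMulTop_torsion hϖ hM]

end DiscreteValuationRing

end Iwasawa

open Module PowerSeries IsLocalRing Iwasawa in
theorem stmt19_general {O : Type*} [CommRing O] [IsDomain O] [IsDiscreteValuationRing O]
    [IsAdicComplete (maximalIdeal O) O] [Finite (ResidueField O)] {ϖ : O} (hϖ : Irreducible ϖ)
    {M₁ : Type*} [AddCommGroup M₁] [Module O⟦X⟧ M₁] [Module O M₁] [IsScalarTower O O⟦X⟧ M₁]
    [Module.Finite O⟦X⟧ M₁]
    {M₂ : Type*} [AddCommGroup M₂] [Module O⟦X⟧ M₂] [Module O M₂] [IsScalarTower O O⟦X⟧ M₂]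
    [Module.Finite O⟦X⟧ M₂]
    (hreg₁ : IsSMulRegular M₁ (C ϖ : O⟦X⟧)) (hreg₂ : IsSMulRegular M₂ (C ϖ : O⟦X⟧))
    (e : QuotSMulTop (C ϖ : O⟦X⟧) M₁ ≃ₗ[O⟦X⟧] QuotSMulTop (C ϖ : O⟦X⟧) M₂)
    {c₁ c₂ : ℕ}
    (hc₁ : Nat.card (Submodule.torsionBy O⟦X⟧ (BidualCokernel O⟦X⟧ M₁) (C ϖ)) =
      Nat.card (ResidueField O) ^ c₁)
    (hc₂ : Nat.card (Submodule.torsionBy O⟦X⟧ (BidualCokernel O⟦X⟧ M₂) (C ϖ)) =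
      Nat.card (ResidueField O) ^ c₂) :
    lambdaInvariant O M₁ + c₁ = lambdaInvariant O M₂ + c₂ := by
  have h₁ := card_ker_quotSMulTop_map_dual_eval hϖ hreg₁
  have h₂ := card_ker_quotSMulTop_map_dual_eval hϖ hreg₂
  rw [hc₁, ← pow_add] at h₁
  rw [hc₂, ← pow_add] at h₂
  have hcard (c : ℕ) : Nat.card (ResidueField O) ^ c ≠ 0 := pow_ne_zero _ Nat.card_pos.ne'
  have : Finite (LinearMap.ker (QuotSMulTop.map (C ϖ) (Dual.eval O⟦X⟧ M₁))) :=
    Nat.finite_of_card_ne_zero (h₁.trans_ne (hcard _))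
  have : Finite (LinearMap.ker (QuotSMulTop.map (C ϖ) (Dual.eval O⟦X⟧ M₂))) :=
    Nat.finite_of_card_ne_zero (h₂.trans_ne (hcard _))
  have hker := card_ker_quotSMulTop_map_dual_eval_congr
    (IsSMulRegular.of_ne_zero (C_ne_zero hϖ.ne_zero)) (isSMulRegular_X_quotSMulTop_C ϖ)
    X_mem_jacobson_bot e
  exact Nat.pow_right_injective Finite.one_lt_card (h₁.symm.trans (hker.trans h₂))

/-- Λ = ℤ_p[[X]].  Let M₁, M₂ be finitely generated Λ-modules of Λ-rank one,
with μ-invariant zero (finite p-power torsion) and with no nontrivial finite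
Λ-submodules.  If M₁/pM₁ ≅ M₂/pM₂, then λ(M₁) + c(M₁) = λ(M₂) + c(M₂), where
λ(M) is the ℤ_p-rank of the Λ-torsion submodule and c(M) is defined by
|T₂(M)[p]| = p^{c(M)}, with T₂(M) the cokernel of the map from M to its
reflexive hull M^{++}. -/
theorem stmt19 (p : ℕ) [Fact p.Prime]
    (M₁ : Type*) [AddCommGroup M₁] [Module (PowerSeries ℤ_[p]) M₁]
    [Module ℤ_[p] M₁] [IsScalarTower ℤ_[p] (PowerSeries ℤ_[p]) M₁]
    [Module.Finite (PowerSeries ℤ_[p]) M₁]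
    (M₂ : Type*) [AddCommGroup M₂] [Module (PowerSeries ℤ_[p]) M₂]
    [Module ℤ_[p] M₂] [IsScalarTower ℤ_[p] (PowerSeries ℤ_[p]) M₂]
    [Module.Finite (PowerSeries ℤ_[p]) M₂]
    (hrk₁ : Module.rank (PowerSeries ℤ_[p]) M₁ = 1)
    (hrk₂ : Module.rank (PowerSeries ℤ_[p]) M₂ = 1)
    (hμ₁ : Set.Finite {x : M₁ | ∃ k : ℕ, (p : PowerSeries ℤ_[p]) ^ k • x = 0})
    (hμ₂ : Set.Finite {x : M₂ | ∃ k : ℕ, (p : PowerSeries ℤ_[p]) ^ k • x = 0})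
    (hfin₁ : ∀ S : Submodule (PowerSeries ℤ_[p]) M₁, (S : Set M₁).Finite → S = ⊥)
    (hfin₂ : ∀ S : Submodule (PowerSeries ℤ_[p]) M₂, (S : Set M₂).Finite → S = ⊥)
    (hmod : Nonempty
      ((M₁ ⧸ (Ideal.span {(p : PowerSeries ℤ_[p])} • (⊤ : Submodule (PowerSeries ℤ_[p]) M₁)))
        ≃ₗ[PowerSeries ℤ_[p]]
       (M₂ ⧸ (Ideal.span {(p : PowerSeries ℤ_[p])} • (⊤ : Submodule (PowerSeries ℤ_[p]) M₂))))) :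
    ∀ c₁ c₂ : ℕ,
      Nat.card {x : (Module.Dual (PowerSeries ℤ_[p]) (Module.Dual (PowerSeries ℤ_[p]) M₁)) ⧸
          LinearMap.range (Module.Dual.eval (PowerSeries ℤ_[p]) M₁) //
            (p : PowerSeries ℤ_[p]) • x = 0} = p ^ c₁ →
      Nat.card {x : (Module.Dual (PowerSeries ℤ_[p]) (Module.Dual (PowerSeries ℤ_[p]) M₂)) ⧸
          LinearMap.range (Module.Dual.eval (PowerSeries ℤ_[p]) M₂) //
            (p : PowerSeries ℤ_[p]) • x = 0} = p ^ c₂ →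
      Module.finrank ℤ_[p]
          ((Submodule.torsion (PowerSeries ℤ_[p]) M₁).restrictScalars ℤ_[p]) + c₁ =
        Module.finrank ℤ_[p]
          ((Submodule.torsion (PowerSeries ℤ_[p]) M₂).restrictScalars ℤ_[p]) + c₂ := by
  intro c₁ c₂ hc₁ hc₂
  have hC : PowerSeries.C (p : ℤ_[p]) = (p : PowerSeries ℤ_[p]) := map_natCast _ p
  have hq : Nat.card (IsLocalRing.ResidueField ℤ_[p]) = p :=
    (Nat.card_congr PadicInt.residueField.toEquiv).trans (Nat.card_zmod p)
  have : Finite (IsLocalRing.ResidueField ℤ_[p]) := .of_equiv _ PadicInt.residueField.toEquiv.symm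
  have hgeneral := stmt19_general (M₁ := M₁) (M₂ := M₂) (c₁ := c₁) (c₂ := c₂)
    (PadicInt.irreducible_p (p := p))
  rw [Submodule.ideal_span_singleton_smul, Submodule.ideal_span_singleton_smul] at hmod
  rw [hC, hq] at hgeneral
  rw [Iwasawa.finrank_restrictScalars, Iwasawa.finrank_restrictScalars]
  exact hgeneral (Iwasawa.isSMulRegular_of_finite_torsion hμ₁ hfin₁)
    (Iwasawa.isSMulRegular_of_finite_torsion hμ₂ hfin₂) hmod.some hc₁ hc₂
end
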